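/- arXiv:2012.02239 — 2 statements merged into one kernel-verified Lean document; each statement's English description precedes it below -/
import Mathlib

section
/- If G ⊆ R^m is a signature Gröbner basis, then ‾G = {‾g : g ∈ G} is a Gröbner basis of the ideal ⟨f_1,…,f_m⟩ of R generated by f_1,…,f_m. -/
namespace SigGB

noncomputable section

/-- Power-products in `n` indeterminates, written additively as exponent vectors
(so the power-product `1` is `0`, and multiplication of power-products is `+`). -/
abbrev PP (n : ℕ) : Type := Fin n →₀ ℕ

/-- Terms: a power-product together with a component index (`t·e_i ↝ (t, i)`). -/
abbrev Term (n m : ℕ) : Type := PP n × Fin m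

/-- Multiplication of a term by a power-product: `t ⊗ (s·e_i) = (t·s)·e_i`. -/
def mulTerm {n m : ℕ} (t : PP n) (u : Term n m) : Term n m := (t + u.1, u.2)

/-- Divisibility of terms: `u ∣ v` iff `v = t ⊗ u` for some power-product `t`. -/
def termDvd {n m : ℕ} (u v : Term n m) : Prop := ∃ t : PP n, v = mulTerm t u

/-- Componentwise lcm of power-products. -/
noncomputable def lcmPP {n : ℕ} (s t : PP n) : PP n := Finsupp.zipWith max (max_self 0) s t

/-- Strict part of a relation. -/
def strict {α : Type*} (r : α → α → Prop) (x y : α) : Prop := r x y ∧ x ≠ y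

/-- `ple` is an admissible order on power-products and `tle` is a compatible
linear order on terms. -/
structure OrdersOK {n m : ℕ} (ple : PP n → PP n → Prop)
    (tle : Term n m → Term n m → Prop) : Prop where
  ple_refl : ∀ t, ple t t
  ple_trans : ∀ s t u, ple s t → ple t u → ple s u
  ple_antisymm : ∀ s t, ple s t → ple t s → s = t
  ple_total : ∀ s t, ple s t ∨ ple t s
  ple_one_le : ∀ t, ple 0 t
  ple_mul : ∀ (t s₁ s₂ : PP n), ple s₁ s₂ → ple (t + s₁) (t + s₂)
  tle_refl : ∀ u, tle u u
  tle_trans : ∀ u v w, tle u v → tle v w → tle u w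
  tle_antisymm : ∀ u v, tle u v → tle v u → u = v
  tle_total : ∀ u v, tle u v ∨ tle v u
  tle_mul : ∀ (t : PP n) (u v : Term n m), tle u v → tle (mulTerm t u) (mulTerm t v)
  tle_compat : ∀ (s t : PP n) (i j : Fin m), ple s t → i ≤ j → tle (s, i) (t, j)

variable {K : Type*} [Field K] {n m : ℕ} [NeZero m]

variable (f : Fin m → MvPolynomial (Fin n) K)
variable (ple : PP n → PP n → Prop)
variable (tle : Term n m → Term n m → Prop)

/-- The module homomorphism `R^m → R` determined by `e_i ↦ f i`, i.e. `a ↦ ‾a`. -/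
def bar (a : Fin m → MvPolynomial (Fin n) K) : MvPolynomial (Fin n) K := ∑ i, a i * f i

/-- Multiplication of a module element by a coefficient `c` and a power-product `t`. -/
noncomputable def monomMul (c : K) (t : PP n) (a : Fin m → MvPolynomial (Fin n) K) :
    Fin m → MvPolynomial (Fin n) K :=
  fun i => MvPolynomial.monomial t c * a i

/-- The coefficient of a term in a module element. -/
def coeffM (a : Fin m → MvPolynomial (Fin n) K) (u : Term n m) : K :=
  MvPolynomial.coeff u.1 (a u.2)

open Classical in
/-- Leading power-product of a polynomial w.r.t. `ple`
(junk value `0`, i.e. the power-product `1`, for the zero polynomial). -/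
noncomputable def lp (p : MvPolynomial (Fin n) K) : PP n :=
  if h : ∃ t, MvPolynomial.coeff t p ≠ 0 ∧ ∀ s, MvPolynomial.coeff s p ≠ 0 → ple s t
  then h.choose else 0

/-- Leading coefficient of a polynomial w.r.t. `ple`. -/
noncomputable def lc (p : MvPolynomial (Fin n) K) : K := MvPolynomial.coeff (lp ple p) p

open Classical in
/-- Signature of a module element: its `tle`-largest term with nonzero coefficient
(junk value for `0`). -/
noncomputable def sig (a : Fin m → MvPolynomial (Fin n) K) : Term n m :=
  if h : ∃ u, coeffM a u ≠ 0 ∧ ∀ v, coeffM a v ≠ 0 → tle v u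
  then h.choose else ((0 : PP n), (0 : Fin m))

/-- Leading coefficient of a module element. -/
noncomputable def lcM (a : Fin m → MvPolynomial (Fin n) K) : K := coeffM a (sig tle a)

/-- One-step s-reduction of `a` to `b` modulo `G`, witnessed by `g ∈ G` and the
power-product `t`. -/
def RedStepWith (G : Set (Fin m → MvPolynomial (Fin n) K))
    (a b g : Fin m → MvPolynomial (Fin n) K) (t : PP n) : Prop :=
  g ∈ G ∧ bar f g ≠ 0 ∧
    MvPolynomial.coeff (t + lp ple (bar f g)) (bar f a) ≠ 0 ∧
    b = a - monomMul (MvPolynomial.coeff (t + lp ple (bar f g)) (bar f a) / lc ple (bar f g)) t g ∧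
    tle (mulTerm t (sig tle g)) (sig tle a)

/-- The step witnessed by `g` and `t` is regular: `t ⊗ 𝔰(g) ≺_t 𝔰(a)`. -/
def RegularWith (a g : Fin m → MvPolynomial (Fin n) K) (t : PP n) : Prop :=
  strict tle (mulTerm t (sig tle g)) (sig tle a)

/-- The step witnessed by `g` and `t` is top: `t·lp(‾g) = lp(‾a)`. -/
def TopWith (a g : Fin m → MvPolynomial (Fin n) K) (t : PP n) : Prop :=
  t + lp ple (bar f g) = lp ple (bar f a)

/-- `a` s-reduces to `b` modulo `G` in one step. -/
def SigRedStep (G : Set (Fin m → MvPolynomial (Fin n) K))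
    (a b : Fin m → MvPolynomial (Fin n) K) : Prop :=
  ∃ g t, RedStepWith f ple tle G a b g t

/-- `a` regular s-reduces to `b` modulo `G` in one step. -/
def RegRedStep (G : Set (Fin m → MvPolynomial (Fin n) K))
    (a b : Fin m → MvPolynomial (Fin n) K) : Prop :=
  ∃ g t, RedStepWith f ple tle G a b g t ∧ RegularWith tle a g t

/-- `a` regular top s-reduces to `b` modulo `G` in one step. -/
def RegTopRedStep (G : Set (Fin m → MvPolynomial (Fin n) K))
    (a b : Fin m → MvPolynomial (Fin n) K) : Prop :=
  ∃ g t, RedStepWith f ple tle G a b g t ∧ RegularWith tle a g t ∧ TopWith f ple a g t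

/-- `a` is regular s-irreducible modulo `G`. -/
def RegIrred (G : Set (Fin m → MvPolynomial (Fin n) K))
    (a : Fin m → MvPolynomial (Fin n) K) : Prop :=
  ∀ b, ¬ RegRedStep f ple tle G a b

/-- `a` is regular top s-irreducible modulo `G`. -/
def RegTopIrred (G : Set (Fin m → MvPolynomial (Fin n) K))
    (a : Fin m → MvPolynomial (Fin n) K) : Prop :=
  ∀ b, ¬ RegTopRedStep f ple tle G a b

/-- `a` s-reduces to zero modulo `G`. -/
def SigRedZero (G : Set (Fin m → MvPolynomial (Fin n) K))
    (a : Fin m → MvPolynomial (Fin n) K) : Prop :=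
  ∃ b, Relation.ReflTransGen (SigRedStep f ple tle G) a b ∧ bar f b = 0

/-- `a` regular s-reduces to zero modulo `G`. -/
def RegRedZero (G : Set (Fin m → MvPolynomial (Fin n) K))
    (a : Fin m → MvPolynomial (Fin n) K) : Prop :=
  ∃ b, Relation.ReflTransGen (RegRedStep f ple tle G) a b ∧ bar f b = 0

/-- `G` is a signature Gröbner basis in the term `u`. -/
def IsSigGBIn (G : Set (Fin m → MvPolynomial (Fin n) K)) (u : Term n m) : Prop :=
  ∀ a : Fin m → MvPolynomial (Fin n) K, a ≠ 0 → sig tle a = u → SigRedZero f ple tle G a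

/-- `G` is a signature Gröbner basis up to the term `u`. -/
def IsSigGBUpto (G : Set (Fin m → MvPolynomial (Fin n) K)) (u : Term n m) : Prop :=
  ∀ v, strict tle v u → IsSigGBIn f ple tle G v

/-- `u` is a syzygy signature. -/
def IsSyzSig (u : Term n m) : Prop :=
  ∃ a : Fin m → MvPolynomial (Fin n) K, a ≠ 0 ∧ sig tle a = u ∧ bar f a = 0

/-- The sig-poly-pair `(𝔰(a), ‾a)` of a module element `a`. -/
noncomputable def sppOf (a : Fin m → MvPolynomial (Fin n) K) :
    Term n m × MvPolynomial (Fin n) K :=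
  (sig tle a, bar f a)

/-- `x` is a sig-poly-pair. -/
def IsSPP (x : Term n m × MvPolynomial (Fin n) K) : Prop :=
  ∃ a : Fin m → MvPolynomial (Fin n) K, a ≠ 0 ∧ sppOf f tle a = x

/-- `ro` is a rewrite order. -/
def IsRewriteOrder
    (ro : Term n m × MvPolynomial (Fin n) K → Term n m × MvPolynomial (Fin n) K → Prop) :
    Prop :=
  (∀ x, IsSPP f tle x → ro x x) ∧
  (∀ x y z, IsSPP f tle x → IsSPP f tle y → IsSPP f tle z → ro x y → ro y z → ro x z) ∧
  (∀ x y, IsSPP f tle x → IsSPP f tle y → (ro x y ∨ ro y x)) ∧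
  (∀ x y, IsSPP f tle x → IsSPP f tle y → ro x y → ro y x → x.1 = y.1) ∧
  (∀ (G : Set (Fin m → MvPolynomial (Fin n) K)) (a b : Fin m → MvPolynomial (Fin n) K),
    IsSigGBUpto f ple tle G (sig tle b) → a ∈ G → b ∈ G → a ≠ 0 → b ≠ 0 →
    termDvd (sig tle a) (sig tle b) → RegTopIrred f ple tle G b →
    ro (sppOf f tle a) (sppOf f tle b))

/-- `a` is a canonical rewriter in the term `u` w.r.t. `G` (for the rewrite order `ro`). -/
def IsCanonRewriter
    (ro : Term n m × MvPolynomial (Fin n) K → Term n m × MvPolynomial (Fin n) K → Prop)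
    (G : Set (Fin m → MvPolynomial (Fin n) K)) (u : Term n m)
    (a : Fin m → MvPolynomial (Fin n) K) : Prop :=
  a ∈ G ∧ a ≠ 0 ∧ termDvd (sig tle a) u ∧
    ∀ g ∈ G, g ≠ 0 → termDvd (sig tle g) u → ro (sppOf f tle g) (sppOf f tle a)

/-- `G` is a rewrite basis in the term `u` (for the rewrite order `ro`). -/
def IsRBIn
    (ro : Term n m × MvPolynomial (Fin n) K → Term n m × MvPolynomial (Fin n) K → Prop)
    (G : Set (Fin m → MvPolynomial (Fin n) K)) (u : Term n m) : Prop :=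
  IsSyzSig f tle u ∨
    ∃ g, IsCanonRewriter f tle ro G u g ∧
      RegTopIrred f ple tle G (monomMul (1 : K) (u.1 - (sig tle g).1) g)

/-- `G` is a rewrite basis up to the term `u` (for the rewrite order `ro`). -/
def IsRBUpto
    (ro : Term n m × MvPolynomial (Fin n) K → Term n m × MvPolynomial (Fin n) K → Prop)
    (G : Set (Fin m → MvPolynomial (Fin n) K)) (u : Term n m) : Prop :=
  ∀ v, strict tle v u → IsRBIn f ple tle ro G v

/-- The S-pair of two module elements. -/
noncomputable def spair (a b : Fin m → MvPolynomial (Fin n) K) :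
    Fin m → MvPolynomial (Fin n) K :=
  monomMul ((1 : K) / lc ple (bar f a))
      (lcmPP (lp ple (bar f a)) (lp ple (bar f b)) - lp ple (bar f a)) a -
    monomMul ((1 : K) / lc ple (bar f b))
      (lcmPP (lp ple (bar f a)) (lp ple (bar f b)) - lp ple (bar f b)) b

/-- `a` and `b` give rise to a regular S-pair. -/
def IsRegularSPair (a b : Fin m → MvPolynomial (Fin n) K) : Prop :=
  bar f a ≠ 0 ∧ bar f b ≠ 0 ∧
    mulTerm (lcmPP (lp ple (bar f a)) (lp ple (bar f b)) - lp ple (bar f a)) (sig tle a) ≠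
      mulTerm (lcmPP (lp ple (bar f a)) (lp ple (bar f b)) - lp ple (bar f b)) (sig tle b)

/-- `B` is a Gröbner basis of the ideal `I` w.r.t. `ple`. -/
def IsGroebnerBasis (B : Set (MvPolynomial (Fin n) K)) (I : Ideal (MvPolynomial (Fin n) K)) :
    Prop :=
  (∀ b ∈ B, b ∈ I) ∧ Ideal.span B = I ∧
    ∀ p ∈ I, p ≠ 0 → ∃ b ∈ B, b ≠ 0 ∧ ∃ t : PP n, lp ple p = t + lp ple b

/-- One step of ordinary polynomial reduction of `p` to `q` modulo `B`. -/
def PolyRedStep (B : Set (MvPolynomial (Fin n) K)) (p q : MvPolynomial (Fin n) K) : Prop :=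
  ∃ r ∈ B, r ≠ 0 ∧ ∃ t : PP n, MvPolynomial.coeff (t + lp ple r) p ≠ 0 ∧
    q = p - MvPolynomial.monomial t (MvPolynomial.coeff (t + lp ple r) p / lc ple r) * r

/-!
Applying `bar f` to an s-reduction of `a` gives an ordinary polynomial reduction of `bar f a`
modulo `bar f '' G`, so every element of the ideal reduces to zero. A reduction step that does not
cancel the leading power-product leaves it unchanged. Hence the leading power-product of a nonzero
polynomial that reduces to zero is cancelled at some step, and the basis element used there has a
leading power-product dividing it.
-/

open MvPolynomial (coeff monomial)

theorem exists_mem_forall_mem_rel {α : Type*} (r : α → α → Prop) [IsTrans α r] [Std.Total r]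
    {s : Finset α} (hs : s.Nonempty) : ∃ a ∈ s, ∀ b ∈ s, r b a := by
  have : Nonempty s := hs.to_subtype
  have hdir : Directed r (Subtype.val : s → α) := fun a b =>
    (total_of r a.1 b.1).elim (fun h => ⟨b, h, refl_of r b.1⟩) fun h => ⟨a, refl_of r a.1, h⟩
  obtain ⟨a, ha⟩ := hdir.finset_le Finset.univ
  exact ⟨a, a.2, fun b hb => ha ⟨b, hb⟩ (Finset.mem_univ _)⟩

variable {f ple tle}

section LeadingPowerProduct

variable {p q r : MvPolynomial (Fin n) K} {s t : PP n}

theorem lp_spec [IsTrans (PP n) ple] [Std.Total ple] (hp : p ≠ 0) :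
    coeff (lp ple p) p ≠ 0 ∧ ∀ s, coeff s p ≠ 0 → ple s (lp ple p) := by
  have h : ∃ t, coeff t p ≠ 0 ∧ ∀ s, coeff s p ≠ 0 → ple s t := by
    simpa only [MvPolynomial.mem_support_iff] using
      exists_mem_forall_mem_rel ple (MvPolynomial.support_nonempty.2 hp)
  rw [lp, dif_pos h]
  exact h.choose_spec

theorem ple_lp_of_coeff_ne_zero [IsTrans (PP n) ple] [Std.Total ple] (hs : coeff s p ≠ 0) :
    ple s (lp ple p) :=
  (lp_spec (MvPolynomial.ne_zero_iff.2 ⟨s, hs⟩)).2 s hs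

theorem lp_eq_of_forall_ple [IsLinearOrder (PP n) ple] (ht : coeff t p ≠ 0)
    (hmax : ∀ s, coeff s p ≠ 0 → ple s t) : lp ple p = t :=
  antisymm_of ple (hmax _ (lp_spec (MvPolynomial.ne_zero_iff.2 ⟨t, ht⟩)).1)
    (ple_lp_of_coeff_ne_zero ht)

theorem ple_add_lp_of_coeff_monomial_mul_ne_zero [IsTrans (PP n) ple] [Std.Total ple]
    (hmul : Covariant (PP n) (PP n) (· + ·) ple) {c : K}
    (hs : coeff s (monomial t c * q) ≠ 0) : ple s (t + lp ple q) := by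
  obtain ⟨hts, hcoeff⟩ : t ≤ s ∧ c * coeff (s - t) q ≠ 0 := by
    simpa only [MvPolynomial.coeff_monomial_mul', ne_eq, ite_eq_right_iff, Classical.not_imp]
      using hs
  simpa only [add_tsub_cancel_of_le hts] using
    hmul t (ple_lp_of_coeff_ne_zero (right_ne_zero_of_mul hcoeff))

theorem sub_ne_zero_and_lp_sub_eq [IsLinearOrder (PP n) ple] (hp : p ≠ 0)
    (hr : ∀ s, coeff s r ≠ 0 → strict ple s (lp ple p)) :
    p - r ≠ 0 ∧ lp ple (p - r) = lp ple p := by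
  have hr_lp : coeff (lp ple p) r = 0 := by
    by_contra h
    exact (hr _ h).2 rfl
  have hcoeff : coeff (lp ple p) (p - r) ≠ 0 := by
    rw [MvPolynomial.coeff_sub, hr_lp, sub_zero]
    exact (lp_spec hp).1
  refine ⟨MvPolynomial.ne_zero_iff.2 ⟨_, hcoeff⟩, lp_eq_of_forall_ple hcoeff fun s hs => ?_⟩
  by_cases hps : coeff s p = 0
  · refine (hr s fun hrs => hs ?_).1
    rw [MvPolynomial.coeff_sub, hps, hrs, sub_zero]
  · exact ple_lp_of_coeff_ne_zero hps

end LeadingPowerProduct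

section PolynomialReduction

variable {B : Set (MvPolynomial (Fin n) K)} {I : Ideal (MvPolynomial (Fin n) K)}
  {p q : MvPolynomial (Fin n) K}

variable (ple B p) in
/-- Top-reducibility of a nonzero polynomial `p` modulo `B`: the leading power-product of some
nonzero element of `B` divides that of `p`. It is the divisibility condition in the definition of
a Gröbner basis; for `p = 0` it refers to the junk value of `lp`. -/
def TopReducible : Prop := ∃ b ∈ B, b ≠ 0 ∧ ∃ t : PP n, lp ple p = t + lp ple b

theorem PolyRedStep.mem_span_of_mem_span (h : PolyRedStep ple B p q) (hq : q ∈ Ideal.span B) :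
    p ∈ Ideal.span B := by
  obtain ⟨b, hb, -, t, -, rfl⟩ := h
  exact (Submodule.sub_mem_iff_left _ (Ideal.mul_mem_left _ _ (Ideal.subset_span hb))).1 hq

theorem PolyRedStep.topReducible_or_lp_eq [IsLinearOrder (PP n) ple]
    (hmul : Covariant (PP n) (PP n) (· + ·) ple) (h : PolyRedStep ple B p q) :
    TopReducible ple B p ∨ q ≠ 0 ∧ lp ple q = lp ple p := by
  obtain ⟨b, hb, hb0, t, ht, rfl⟩ := h
  by_cases htop : lp ple p = t + lp ple b
  · exact .inl ⟨b, hb, hb0, t, htop⟩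
  · have hle : ple (t + lp ple b) (lp ple p) := ple_lp_of_coeff_ne_zero ht
    refine .inr (sub_ne_zero_and_lp_sub_eq (MvPolynomial.ne_zero_iff.2 ⟨_, ht⟩) fun s hs => ?_)
    have hs_le := ple_add_lp_of_coeff_monomial_mul_ne_zero hmul hs
    exact ⟨trans_of ple hs_le hle, fun heq => htop (antisymm_of ple (heq ▸ hs_le) hle)⟩

theorem mem_span_of_reduces_to_zero (h : Relation.ReflTransGen (PolyRedStep ple B) p 0) :
    p ∈ Ideal.span B := by
  induction h using Relation.ReflTransGen.head_induction_on with
  | refl => exact zero_mem _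
  | head hstep _ ih => exact hstep.mem_span_of_mem_span ih

theorem topReducible_of_reduces_to_zero [IsLinearOrder (PP n) ple]
    (hmul : Covariant (PP n) (PP n) (· + ·) ple)
    (h : Relation.ReflTransGen (PolyRedStep ple B) p 0) (hp : p ≠ 0) : TopReducible ple B p := by
  induction h using Relation.ReflTransGen.head_induction_on with
  | refl => exact absurd rfl hp
  | head hstep _ ih =>
    obtain htop | ⟨hq, hlp⟩ := hstep.topReducible_or_lp_eq hmul
    · exact htop
    · simpa only [TopReducible, hlp] using ih hq

theorem isGroebnerBasis_of_forall_reduces_to_zero [IsLinearOrder (PP n) ple]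
    (hmul : Covariant (PP n) (PP n) (· + ·) ple) (hBI : B ⊆ I)
    (hred : ∀ p ∈ I, Relation.ReflTransGen (PolyRedStep ple B) p 0) :
    IsGroebnerBasis ple B I :=
  ⟨hBI, le_antisymm (Ideal.span_le.2 hBI) fun p hp => mem_span_of_reduces_to_zero (hred p hp),
    fun p hp => topReducible_of_reduces_to_zero hmul (hred p hp)⟩

end PolynomialReduction

section Evaluation

variable {k : ℕ} {h : Fin k → MvPolynomial (Fin n) K}

theorem bar_zero : bar h 0 = 0 := by
  simp only [bar, Pi.zero_apply, zero_mul, Finset.sum_const_zero]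

theorem bar_sub_monomMul (c : K) (t : PP n) (a b : Fin k → MvPolynomial (Fin n) K) :
    bar h (a - monomMul c t b) = bar h a - monomial t c * bar h b := by
  simp only [bar, monomMul, Pi.sub_apply, sub_mul, mul_assoc, Finset.sum_sub_distrib,
    Finset.mul_sum]

theorem mem_span_range_iff_exists_bar_eq {p : MvPolynomial (Fin n) K} :
    p ∈ Ideal.span (Set.range h) ↔ ∃ a, bar h a = p :=
  Ideal.mem_span_range_iff_exists_fun

end Evaluation

section SignatureReduction

variable {G : Set (Fin m → MvPolynomial (Fin n) K)} {a b : Fin m → MvPolynomial (Fin n) K}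

theorem SigRedStep.polyRedStep_bar (h : SigRedStep f ple tle G a b) :
    PolyRedStep ple (bar f '' G) (bar f a) (bar f b) := by
  obtain ⟨g, t, hg, hg0, ht, rfl, -⟩ := h
  exact ⟨bar f g, Set.mem_image_of_mem _ hg, hg0, t, ht, bar_sub_monomMul _ _ _ _⟩

theorem SigRedZero.bar_reduces_to_zero (h : SigRedZero f ple tle G a) :
    Relation.ReflTransGen (PolyRedStep ple (bar f '' G)) (bar f a) 0 := by
  obtain ⟨b, hab, hb⟩ := h
  exact hb ▸ hab.lift (bar f) fun _ _ => SigRedStep.polyRedStep_bar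

end SignatureReduction

theorem OrdersOK.isLinearOrder {k : ℕ} {tle : Term n k → Term n k → Prop}
    (hord : OrdersOK ple tle) : IsLinearOrder (PP n) ple where
  refl := hord.ple_refl
  trans := hord.ple_trans
  antisymm := hord.ple_antisymm
  total := hord.ple_total

variable (f ple tle)

theorem sigGB_is_groebner_general [IsLinearOrder (PP n) ple]
    (hmul : Covariant (PP n) (PP n) (· + ·) ple)
    (G : Set (Fin m → MvPolynomial (Fin n) K))
    (hG : ∀ u : Term n m, IsSigGBIn f ple tle G u) :
    IsGroebnerBasis ple (bar f '' G) (Ideal.span (Set.range f)) := by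
  have hsub : bar f '' G ⊆ Ideal.span (Set.range f) := by
    rintro _ ⟨g, -, rfl⟩
    exact mem_span_range_iff_exists_bar_eq.2 ⟨g, rfl⟩
  refine isGroebnerBasis_of_forall_reduces_to_zero hmul hsub fun p hp => ?_
  obtain ⟨a, rfl⟩ := mem_span_range_iff_exists_bar_eq.1 hp
  obtain rfl | ha := eq_or_ne a 0
  · rw [bar_zero]
  · exact (hG _ a ha rfl).bar_reduces_to_zero

/-- if `G` is a signature Gröbner basis, then `‾G` is a Gröbner basis
of the ideal generated by `f_1, …, f_m`. -/
theorem sigGB_is_groebner (hord : OrdersOK ple tle)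
    (G : Set (Fin m → MvPolynomial (Fin n) K))
    (hG : ∀ u : Term n m, IsSigGBIn f ple tle G u) :
    IsGroebnerBasis ple (bar f '' G) (Ideal.span (Set.range f)) := by
  have := hord.isLinearOrder
  exact sigGB_is_groebner_general f ple tle hord.ple_mul G hG

end

end SigGB
end

section
/- Fix a rewrite order ⊴. If G ⊆ R^m is a rewrite basis (i.e., a rewrite basis in every term), then ‾G = {‾g : g ∈ G} is a Gröbner basis of the ideal ⟨f_1,…,f_m⟩ of R generated by f_1,…,f_m. -/
namespace SigGB

noncomputable section

variable {K : Type*} [Field K] {n m : ℕ} [NeZero m]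

variable (f : Fin m → MvPolynomial (Fin n) K)
variable (ple : PP n → PP n → Prop)
variable (tle : Term n m → Term n m → Prop)

/-!
The ideal consists of the images `‾a`, so it suffices that every module element `a` with nonzero
image is top s-reducible: the reducer `g` then satisfies `lp ‾g ∣ lp ‾a`. This is proved by
well-founded induction on the signature of `a`. In that signature there is an element `b` that is
either a syzygy or a regular top s-irreducible multiple of an element of `G`. If `‾b = 0` or
`lp ‾b ≺ lp ‾a`, subtracting a scalar multiple of `b` from `a` lowers the signature and preserves
`lp ‾a`, so the induction hypothesis applies. If `lp ‾a ≺ lp ‾b`, the same subtraction with `a` and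
`b` exchanged yields a top s-reducible element of smaller signature with leading power-product
`lp ‾b`, contradicting the irreducibility of `b`. In the remaining case `lp ‾a = lp ‾b`, the
generator of which `b` is a multiple reduces `a`.
-/

section StrictPart

variable {α : Type*} {r : α → α → Prop} {x y z : α}

theorem strict_of_le_of_strict [IsTrans α r] [Std.Antisymm r] (hxy : r x y) (hyz : strict r y z) :
    strict r x z :=
  ⟨_root_.trans hxy hyz.1, fun hxz => hyz.2 (antisymm hyz.1 (hxz ▸ hxy))⟩

theorem le_of_not_strict [Std.Total r] (h : ¬ strict r y x) : r x y := by
  rcases total_of r x y with hxy | hyx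
  · exact hxy
  · obtain rfl : y = x := by_contra fun hne => h ⟨hyx, hne⟩
    exact hyx

theorem wellFounded_strict_of_le [LE α] [WellQuasiOrderedLE α] [IsPartialOrder α r]
    (hr : ∀ x y : α, x ≤ y → r x y) : WellFounded (strict r) := by
  have hwqo : WellQuasiOrdered r :=
    wellQuasiOrdered_le.of_surjective ⟨id, hr _ _⟩ Function.surjective_id
  exact Subrelation.wf (fun hxy => ⟨hxy.1, fun hyx => hxy.2 (antisymm hxy.1 hyx)⟩) hwqo.wellFounded

end StrictPart

section Leading

variable {α β M : Type*} {r : α → α → Prop}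

/-- `u` is the `r`-largest index at which the coefficient family `c` is nonzero. This treats
leading power-products of polynomials and signatures of module elements uniformly. -/
def IsLeading [Zero M] (r : α → α → Prop) (c : α → M) (u : α) : Prop :=
  c u ≠ 0 ∧ ∀ v, c v ≠ 0 → r v u

theorem exists_isLeading [Zero M] [IsTrans α r] [Std.Total r] {c : α → M}
    (hfin : c.support.Finite) (hne : c.support.Nonempty) : ∃ u, IsLeading r c u := by
  have := hfin.to_subtype
  have := hne.to_subtype
  obtain ⟨u, hu⟩ := (Std.Total.directed (r := r) ((↑) : c.support → α)).finite_le id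
  exact ⟨u, u.2, fun v hv => hu ⟨v, hv⟩⟩

namespace IsLeading

theorem eq [Zero M] [Std.Antisymm r] {c : α → M} {u v : α} (hu : IsLeading r c u)
    (hv : IsLeading r c v) : u = v :=
  antisymm (hv.2 u hu.1) (hu.2 v hv.1)

theorem map [MulZeroClass M] [NoZeroDivisors M] {s : β → β → Prop} {φ : α → β}
    (hφ : ∀ u v, r u v → s (φ u) (φ v)) {c : α → M} {d : β → M} {k : M} (hk : k ≠ 0)
    (hd : ∀ v, d (φ v) = k * c v) (hrange : d.support ⊆ Set.range φ) {u : α}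
    (hu : IsLeading r c u) : IsLeading s d (φ u) := by
  refine ⟨hd u ▸ mul_ne_zero hk hu.1, fun w hw => ?_⟩
  obtain ⟨v, rfl⟩ := hrange hw
  exact hφ v u (hu.2 v (right_ne_zero_of_mul (hd v ▸ hw)))

theorem sub_smul [Ring M] {c d : α → M} {u : α} (hu : IsLeading r c u)
    (hd : ∀ v, d v ≠ 0 → strict r v u) (k : M) : IsLeading r (c - k • d) u := by
  have hdu : d u = 0 := by_contra fun h => (hd u h).2 rfl
  refine ⟨by simpa [hdu] using hu.1, fun v hv => ?_⟩
  by_cases hdv : d v = 0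
  · exact hu.2 v (by simpa [hdv] using hv)
  · exact (hd v hdv).1

theorem strict_of_sub_div_smul_ne_zero [DivisionRing M] {c d : α → M} {u v : α}
    (hc : IsLeading r c u) (hd : IsLeading r d u) (hv : (c - (c u / d u) • d) v ≠ 0) :
    strict r v u := by
  constructor
  · by_cases hdv : d v = 0
    · exact hc.2 v (by simpa [hdv] using hv)
    · exact hd.2 v hdv
  · rintro rfl
    simp [div_mul_cancel₀ _ hd.1] at hv

end IsLeading

end Leading

section Development

variable {f ple tle}

section Preliminaries

omit [NeZero m]

section ModuleElements

variable {a b : Fin m → MvPolynomial (Fin n) K}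

theorem ne_zero_of_bar_ne_zero (ha : bar f a ≠ 0) : a ≠ 0 := by
  rintro rfl
  simp [bar] at ha

theorem bar_sub_smul (a b : Fin m → MvPolynomial (Fin n) K) (c : K) :
    bar f (a - c • b) = bar f a - c • bar f b := by
  simp [bar, sub_mul, Finset.sum_sub_distrib, Finset.smul_sum]

theorem bar_monomMul (c : K) (t : PP n) (a : Fin m → MvPolynomial (Fin n) K) :
    bar f (monomMul c t a) = MvPolynomial.monomial t c * bar f a := by
  simp [bar, monomMul, Finset.mul_sum, mul_assoc]

theorem monomMul_ne_zero {c : K} (hc : c ≠ 0) (ha : a ≠ 0) (t : PP n) : monomMul c t a ≠ 0 := by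
  obtain ⟨i, hi⟩ := Function.ne_iff.1 ha
  exact Function.ne_iff.2 ⟨i, mul_ne_zero (mt MvPolynomial.monomial_eq_zero.1 hc) hi⟩

theorem mem_span_range_iff_exists_bar {p : MvPolynomial (Fin n) K} :
    p ∈ Ideal.span (Set.range f) ↔ ∃ a, bar f a = p := by
  simp [Ideal.mem_span_range_iff_exists_fun, bar]

theorem coeffM_sub_smul (a b : Fin m → MvPolynomial (Fin n) K) (c : K) :
    coeffM (a - c • b) = coeffM a - c • coeffM b := by
  ext u
  simp [coeffM]

theorem finite_support_coeffM (a : Fin m → MvPolynomial (Fin n) K) :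
    (coeffM a).support.Finite := by
  refine (Set.finite_iUnion fun i =>
    (a i).support.finite_toSet.image fun t => ((t, i) : Term n m)).subset fun u hu => ?_
  exact Set.mem_iUnion.2 ⟨u.2, u.1, MvPolynomial.mem_support_iff.2 hu, rfl⟩

theorem support_coeffM_nonempty (ha : a ≠ 0) : (coeffM a).support.Nonempty := by
  obtain ⟨i, hi⟩ := Function.ne_iff.1 ha
  obtain ⟨t, ht⟩ := MvPolynomial.ne_zero_iff.1 hi
  exact ⟨(t, i), ht⟩

end ModuleElements

theorem exists_eq_add_of_coeff_monomial_mul_ne_zero {s t : PP n} {c : K}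
    {p : MvPolynomial (Fin n) K} (hs : (MvPolynomial.monomial t c * p).coeff s ≠ 0) :
    ∃ s', t + s' = s := by
  rw [MvPolynomial.coeff_monomial_mul'] at hs
  exact ⟨s - t, add_tsub_cancel_of_le (ite_ne_right_iff.1 hs).1⟩

namespace OrdersOK

theorem isLinearOrder_ple (h : OrdersOK ple tle) : IsLinearOrder (PP n) ple where
  refl := h.ple_refl
  trans := h.ple_trans
  antisymm := h.ple_antisymm
  total := h.ple_total

theorem isLinearOrder_tle (h : OrdersOK ple tle) : IsLinearOrder (Term n m) tle where
  refl := h.tle_refl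
  trans := h.tle_trans
  antisymm := h.tle_antisymm
  total := h.tle_total

theorem ple_of_le (h : OrdersOK ple tle) {s t : PP n} (hst : s ≤ t) : ple s t := by
  simpa only [add_zero, add_tsub_cancel_of_le hst] using h.ple_mul s 0 (t - s) (h.ple_one_le _)

theorem wellFounded_strict_ple (h : OrdersOK ple tle) : WellFounded (strict ple) :=
  have := h.isLinearOrder_ple
  wellFounded_strict_of_le fun _ _ => h.ple_of_le

theorem wellFounded_strict_tle (h : OrdersOK ple tle) : WellFounded (strict tle) :=
  have := h.isLinearOrder_tle
  wellFounded_strict_of_le fun u v (huv : u ≤ v) =>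
    h.tle_compat u.1 v.1 u.2 v.2 (h.ple_of_le huv.1) huv.2

section LeadingPowerProducts

variable {p q : MvPolynomial (Fin n) K}

theorem isLeading_lp (h : OrdersOK ple tle) (hp : p ≠ 0) : IsLeading ple p.coeff (lp ple p) := by
  have := h.isLinearOrder_ple
  have hex : ∃ t, IsLeading ple p.coeff t :=
    exists_isLeading (p.support.finite_toSet.subset fun _ => MvPolynomial.mem_support_iff.2)
      (MvPolynomial.ne_zero_iff.1 hp)
  have hlp : lp ple p = hex.choose := dif_pos hex
  exact hlp ▸ hex.choose_spec

theorem lp_eq (h : OrdersOK ple tle) {t : PP n} (ht : IsLeading ple p.coeff t) : lp ple p = t :=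
  have := h.isLinearOrder_ple
  (h.isLeading_lp (MvPolynomial.ne_zero_iff.2 ⟨t, ht.1⟩)).eq ht

theorem lp_monomial_mul (h : OrdersOK ple tle) (hp : p ≠ 0) (t : PP n) {c : K} (hc : c ≠ 0) :
    lp ple (MvPolynomial.monomial t c * p) = t + lp ple p :=
  h.lp_eq <| (h.isLeading_lp hp).map (h.ple_mul t) hc
    (fun s => MvPolynomial.coeff_monomial_mul s t c p)
    fun _ => exists_eq_add_of_coeff_monomial_mul_ne_zero

theorem lp_sub_smul (h : OrdersOK ple tle) (hp : p ≠ 0)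
    (hlt : q ≠ 0 → strict ple (lp ple q) (lp ple p)) (c : K) :
    p - c • q ≠ 0 ∧ lp ple (p - c • q) = lp ple p := by
  have := h.isLinearOrder_ple
  have hlead : IsLeading ple (p - c • q).coeff (lp ple p) := by
    refine (h.isLeading_lp hp).sub_smul (d := q.coeff) (fun s hs => ?_) c
    have hq : q ≠ 0 := MvPolynomial.ne_zero_iff.2 ⟨s, hs⟩
    exact strict_of_le_of_strict ((h.isLeading_lp hq).2 s hs) (hlt hq)
  exact ⟨MvPolynomial.ne_zero_iff.2 ⟨_, hlead.1⟩, h.lp_eq hlead⟩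

theorem exists_lp_sub_smul_lt (h : OrdersOK ple tle) (hp : p ≠ 0) (hq : q ≠ 0)
    (hpq : lp ple q = lp ple p) :
    ∃ c : K, p - c • q ≠ 0 → strict ple (lp ple (p - c • q)) (lp ple p) :=
  ⟨p.coeff (lp ple p) / q.coeff (lp ple p), fun hd =>
    (h.isLeading_lp hp).strict_of_sub_div_smul_ne_zero (hpq ▸ h.isLeading_lp hq)
      (h.isLeading_lp hd).1⟩

theorem isGroebnerBasis_of_lp_eq_add (h : OrdersOK ple tle) {B : Set (MvPolynomial (Fin n) K)}
    {I : Ideal (MvPolynomial (Fin n) K)} (hB : B ⊆ I)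
    (hlp : ∀ p ∈ I, p ≠ 0 → ∃ b ∈ B, b ≠ 0 ∧ ∃ t : PP n, lp ple p = t + lp ple b) :
    IsGroebnerBasis ple B I := by
  have hspan : Ideal.span B ≤ I := Ideal.span_le.2 hB
  refine ⟨hB, le_antisymm hspan fun p hp => ?_, hlp⟩
  induction hu : lp ple p using h.wellFounded_strict_ple.induction generalizing p with
  | _ u ih =>
  subst hu
  rcases eq_or_ne p 0 with rfl | hp0
  · exact zero_mem _
  obtain ⟨b, hb, hb0, t, ht⟩ := hlp p hp hp0
  set q := MvPolynomial.monomial t (1 : K) * b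
  have hq0 : q ≠ 0 := mul_ne_zero (mt MvPolynomial.monomial_eq_zero.1 one_ne_zero) hb0
  have hqp : lp ple q = lp ple p := (h.lp_monomial_mul hb0 t one_ne_zero).trans ht.symm
  obtain ⟨c, hlt⟩ := h.exists_lp_sub_smul_lt hp0 hq0 hqp
  have hq : c • q ∈ Ideal.span B :=
    Submodule.smul_of_tower_mem _ c (Ideal.mul_mem_left _ _ (Ideal.subset_span hb))
  suffices p - c • q ∈ Ideal.span B from (Submodule.sub_mem_iff_left _ hq).1 this
  by_cases hd : p - c • q = 0
  · exact hd ▸ zero_mem _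
  · exact ih _ (hlt hd) _ (sub_mem hp (hspan hq)) rfl

end LeadingPowerProducts

end OrdersOK

end Preliminaries

namespace OrdersOK

section Signatures

variable {a b : Fin m → MvPolynomial (Fin n) K}

theorem isLeading_sig (h : OrdersOK ple tle) (ha : a ≠ 0) :
    IsLeading tle (coeffM a) (sig tle a) := by
  have := h.isLinearOrder_tle
  have hex : ∃ u, IsLeading tle (coeffM a) u :=
    exists_isLeading (finite_support_coeffM a) (support_coeffM_nonempty ha)
  have hsig : sig tle a = hex.choose := dif_pos hex
  exact hsig ▸ hex.choose_spec

theorem sig_eq (h : OrdersOK ple tle) {u : Term n m} (hu : IsLeading tle (coeffM a) u) :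
    sig tle a = u := by
  have := h.isLinearOrder_tle
  refine (h.isLeading_sig ?_).eq hu
  rintro rfl
  simpa [coeffM] using hu.1

theorem sig_monomMul (h : OrdersOK ple tle) (ha : a ≠ 0) (t : PP n) {c : K} (hc : c ≠ 0) :
    sig tle (monomMul c t a) = mulTerm t (sig tle a) := by
  refine h.sig_eq ((h.isLeading_sig ha).map (h.tle_mul t) hc
    (fun v => MvPolynomial.coeff_monomial_mul v.1 t c (a v.2)) fun v hv => ?_)
  obtain ⟨s, hs⟩ := exists_eq_add_of_coeff_monomial_mul_ne_zero hv
  exact ⟨(s, v.2), Prod.ext hs rfl⟩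

theorem exists_sig_sub_smul_lt (h : OrdersOK ple tle) (ha : a ≠ 0) (hb : b ≠ 0)
    (hab : sig tle b = sig tle a) :
    ∃ c : K, a - c • b ≠ 0 → strict tle (sig tle (a - c • b)) (sig tle a) := by
  refine ⟨coeffM a (sig tle a) / coeffM b (sig tle a), fun hd =>
    (h.isLeading_sig ha).strict_of_sub_div_smul_ne_zero (hab ▸ h.isLeading_sig hb) ?_⟩
  rw [← coeffM_sub_smul]
  exact (h.isLeading_sig hd).1

theorem exists_lp_eq_sig_lt (h : OrdersOK ple tle) (ha : bar f a ≠ 0) (hb : b ≠ 0)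
    (hab : sig tle b = sig tle a)
    (hlt : bar f b ≠ 0 → strict ple (lp ple (bar f b)) (lp ple (bar f a))) :
    ∃ d, bar f d ≠ 0 ∧ lp ple (bar f d) = lp ple (bar f a) ∧
      strict tle (sig tle d) (sig tle a) := by
  obtain ⟨c, hsig⟩ := h.exists_sig_sub_smul_lt (ne_zero_of_bar_ne_zero ha) hb hab
  obtain ⟨hd, hlp⟩ := h.lp_sub_smul ha hlt c
  rw [← bar_sub_smul] at hd hlp
  exact ⟨a - c • b, hd, hlp, hsig (ne_zero_of_bar_ne_zero hd)⟩

end Signatures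

end OrdersOK

section Reducibility

variable {G : Set (Fin m → MvPolynomial (Fin n) K)}
  {a b d g : Fin m → MvPolynomial (Fin n) K}

variable (f ple tle G) in
/-- `a` is top s-reducible modulo `G`; the reducing step need not be regular. -/
def SigTopReducible (a : Fin m → MvPolynomial (Fin n) K) : Prop :=
  ∃ b g t, RedStepWith f ple tle G a b g t ∧ TopWith f ple a g t

theorem RegTopRedStep.sigTopReducible (h : RegTopRedStep f ple tle G a b) :
    SigTopReducible f ple tle G a :=
  let ⟨g, t, hstep, _, htop⟩ := h
  ⟨b, g, t, hstep, htop⟩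

theorem exists_redStepWith_of_topWith (hord : OrdersOK ple tle) (ha : bar f a ≠ 0) (hgG : g ∈ G)
    (hg : bar f g ≠ 0) {t : PP n} (htop : TopWith f ple a g t)
    (hsig : tle (mulTerm t (sig tle g)) (sig tle a)) :
    ∃ b, RedStepWith f ple tle G a b g t :=
  ⟨_, hgG, hg, htop ▸ (hord.isLeading_lp ha).1, rfl, hsig⟩

theorem SigTopReducible.exists_regTopRedStep (hord : OrdersOK ple tle)
    (hd : SigTopReducible f ple tle G d) (ha : bar f a ≠ 0)
    (hlp : lp ple (bar f d) = lp ple (bar f a)) (hlt : strict tle (sig tle d) (sig tle a)) :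
    ∃ b, RegTopRedStep f ple tle G a b := by
  have := hord.isLinearOrder_tle
  obtain ⟨-, g, t, ⟨hgG, hg, -, -, hsig⟩, htop⟩ := hd
  have htop' : TopWith f ple a g t := htop.trans hlp
  have hreg : RegularWith tle a g t := strict_of_le_of_strict hsig hlt
  obtain ⟨b, hstep⟩ := exists_redStepWith_of_topWith hord ha hgG hg htop' hreg.1
  exact ⟨b, g, t, hstep, hreg, htop'⟩

theorem RegTopIrred.lp_le (hord : OrdersOK ple tle) (hirr : RegTopIrred f ple tle G b)
    (hbelow : ∀ d, bar f d ≠ 0 → strict tle (sig tle d) (sig tle b) →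
      SigTopReducible f ple tle G d)
    (hb : bar f b ≠ 0) (ha : a ≠ 0) (hab : sig tle a = sig tle b) :
    ple (lp ple (bar f b)) (lp ple (bar f a)) := by
  have := hord.isLinearOrder_ple
  refine le_of_not_strict fun hlt => ?_
  obtain ⟨d, hd, hlp, hsig⟩ := hord.exists_lp_eq_sig_lt hb ha hab fun _ => hlt
  obtain ⟨c, hstep⟩ := (hbelow d hd hsig).exists_regTopRedStep hord hb hlp hsig
  exact hirr c hstep

variable (f ple tle G) in
/-- What being a rewrite basis in `u` says without reference to a rewrite order: `u` is a syzygy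
signature, or some multiple of an element of `G`, not necessarily of a canonical rewriter, has
signature `u` and is regular top s-irreducible. -/
def IsIrredBasisIn (u : Term n m) : Prop :=
  IsSyzSig f tle u ∨ ∃ g ∈ G, g ≠ 0 ∧ ∃ t, u = mulTerm t (sig tle g) ∧
    RegTopIrred f ple tle G (monomMul (1 : K) t g)

theorem IsRBIn.isIrredBasisIn
    {ro : Term n m × MvPolynomial (Fin n) K → Term n m × MvPolynomial (Fin n) K → Prop}
    {u : Term n m} (h : IsRBIn f ple tle ro G u) : IsIrredBasisIn f ple tle G u := by
  rcases h with hsyz | ⟨g, ⟨hgG, hg, ⟨t, rfl⟩, -⟩, hirr⟩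
  · exact .inl hsyz
  · rw [mulTerm, add_tsub_cancel_right] at hirr
    exact .inr ⟨g, hgG, hg, t, rfl, hirr⟩

theorem sigTopReducible_of_forall_lt (hord : OrdersOK ple tle)
    (hbelow : ∀ d, bar f d ≠ 0 → strict tle (sig tle d) (sig tle a) →
      SigTopReducible f ple tle G d)
    (hG : IsIrredBasisIn f ple tle G (sig tle a)) (ha : bar f a ≠ 0) :
    SigTopReducible f ple tle G a := by
  have := hord.isLinearOrder_ple
  have reducible_of_lt : ∀ b, b ≠ 0 → sig tle b = sig tle a →
      (bar f b ≠ 0 → strict ple (lp ple (bar f b)) (lp ple (bar f a))) →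
      SigTopReducible f ple tle G a := fun b hb hab hlt => by
    obtain ⟨d, hd, hlp, hsig⟩ := hord.exists_lp_eq_sig_lt ha hb hab hlt
    obtain ⟨_, hstep⟩ := (hbelow d hd hsig).exists_regTopRedStep hord ha hlp hsig
    exact hstep.sigTopReducible
  rcases hG with ⟨s, hs, hsig, hbar⟩ | ⟨g, hgG, hg, t, hsig, hirr⟩
  · exact reducible_of_lt s hs hsig fun h => absurd hbar h
  set b := monomMul (1 : K) t g with hb_def
  have hab : sig tle b = sig tle a := (hord.sig_monomMul hg t one_ne_zero).trans hsig.symm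
  by_cases hlt : bar f b ≠ 0 → strict ple (lp ple (bar f b)) (lp ple (bar f a))
  · exact reducible_of_lt b (monomMul_ne_zero one_ne_zero hg t) hab hlt
  obtain ⟨hb, hnlt⟩ := Classical.not_imp.1 hlt
  have hlp : lp ple (bar f b) = lp ple (bar f a) :=
    antisymm (hirr.lp_le hord (hab ▸ hbelow) hb (ne_zero_of_bar_ne_zero ha) hab.symm)
      (le_of_not_strict hnlt)
  rw [hb_def, bar_monomMul] at hb hlp
  have hbarg : bar f g ≠ 0 := right_ne_zero_of_mul hb
  have htop : TopWith f ple a g t :=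
    (hord.lp_monomial_mul hbarg t one_ne_zero).symm.trans hlp
  obtain ⟨c, hstep⟩ :=
    exists_redStepWith_of_topWith hord ha hgG hbarg htop (hsig ▸ hord.tle_refl _)
  exact ⟨c, g, t, hstep, htop⟩

theorem sigTopReducible_of_bar_ne_zero (hord : OrdersOK ple tle)
    (hG : ∀ u, IsIrredBasisIn f ple tle G u) (ha : bar f a ≠ 0) :
    SigTopReducible f ple tle G a := by
  induction hu : sig tle a using hord.wellFounded_strict_tle.induction generalizing a with
  | _ u ih =>
  subst hu
  exact sigTopReducible_of_forall_lt hord (fun d hd hlt => ih _ hlt hd rfl) (hG _) ha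

theorem rb_is_groebner_general (hord : OrdersOK ple tle)
    (hG : ∀ u, IsIrredBasisIn f ple tle G u) :
    IsGroebnerBasis ple (bar f '' G) (Ideal.span (Set.range f)) := by
  refine hord.isGroebnerBasis_of_lp_eq_add ?_ fun p hp hp0 => ?_
  · rintro _ ⟨g, -, rfl⟩
    exact mem_span_range_iff_exists_bar.2 ⟨g, rfl⟩
  · obtain ⟨a, rfl⟩ := mem_span_range_iff_exists_bar.1 hp
    obtain ⟨-, g, t, ⟨hgG, hg, -⟩, htop⟩ := sigTopReducible_of_bar_ne_zero hord hG hp0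
    exact ⟨_, Set.mem_image_of_mem _ hgG, hg, t, htop.symm⟩

end Reducibility

end Development

/-- if `G` is a rewrite basis (in every term), then `‾G` is a Gröbner
basis of the ideal generated by `f_1, …, f_m`. -/
theorem rb_is_groebner (hord : OrdersOK ple tle)
    (ro : Term n m × MvPolynomial (Fin n) K → Term n m × MvPolynomial (Fin n) K → Prop)
    (hro : IsRewriteOrder f ple tle ro)
    (G : Set (Fin m → MvPolynomial (Fin n) K))
    (hRB : ∀ u : Term n m, IsRBIn f ple tle ro G u) :
    IsGroebnerBasis ple (bar f '' G) (Ideal.span (Set.range f)) :=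
  rb_is_groebner_general hord fun u => (hRB u).isIrredBasisIn

end

end SigGB
end
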